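/- Let Δ ≥ 3 and let f_{λ,d}(z) = λ/(1+z)^d. Suppose d_1,…,d_n ∈ {1,…,Δ−1} and λ ∈ ℂ are such that (f_{λ,d_n} ∘ ⋯ ∘ f_{λ,d_1})(0) = −1. Then there exists a tree T of maximum degree at most Δ with Z_T(λ) = 0. -/

import Mathlib

open scoped Classical

/-- The independence polynomial of a finite simple graph. -/
noncomputable def Zind {V : Type} [Fintype V] (G : SimpleGraph V) (x : ℂ) : ℂ :=
  ∑ I ∈ Finset.univ.powerset.filter
      (fun I : Finset V => ∀ a ∈ I, ∀ b ∈ I, ¬ G.Adj a b), x ^ I.card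

/-! For a tree `T` rooted at `r`, the occupation ratio is the total weight of the independent sets
containing `r` divided by the total weight of those avoiding `r`. Joining a new root to the roots
of `k` copies of a rooted tree of ratio `z` gives a rooted tree of ratio `λ / (1 + z) ^ k`, so the
points of the orbit are ratios of rooted trees, and a tree of ratio `-1` has independence
polynomial zero at `λ`. -/

section IndepSum

variable {V R : Type*} [Fintype V] [CommSemiring R]

/-- The multivariate independence polynomial of `G`, evaluated at the vertex weights `w`.
Deleting a vertex amounts to giving it weight zero. -/
noncomputable def indepSum (G : SimpleGraph V) (w : V → R) : R :=
  ∑ I ∈ {I : Finset V | G.IsIndepSet ↑I}, ∏ v ∈ I, w v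

theorem Zind_eq_indepSum {V : Type} [Fintype V] (G : SimpleGraph V) (x : ℂ) :
    Zind G x = indepSum G fun _ => x := by
  unfold Zind indepSum
  rw [Finset.powerset_univ]
  refine Finset.sum_congr (Finset.filter_congr fun I _ => ?_)
    fun I _ => (Finset.prod_const x).symm
  exact ⟨fun h a ha b hb _ => h a ha b hb, fun h a ha b hb hab => h ha hb hab.ne hab⟩

theorem indepSum_indicator (G : SimpleGraph V) (S : Set V) (w : V → R) :
    indepSum G (S.indicator w) =
      ∑ I ∈ {I : Finset V | G.IsIndepSet ↑I ∧ ↑I ⊆ S}, ∏ v ∈ I, w v := by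
  rw [indepSum, ← Finset.filter_filter, Finset.sum_filter (fun I : Finset V => (I : Set V) ⊆ S)]
  refine Finset.sum_congr rfl fun I _ => ?_
  split_ifs with hI
  · exact Finset.prod_congr rfl fun v hv => Set.indicator_of_mem (hI hv) w
  · obtain ⟨v, hvI, hvS⟩ := Set.not_subset.1 hI
    exact Finset.prod_eq_zero hvI (Set.indicator_of_notMem hvS w)

theorem isIndepSet_insert_iff_of_notMem {V : Type*} {G : SimpleGraph V} {r : V} {J : Set V}
    (hr : r ∉ J) : G.IsIndepSet (insert r J) ↔
      G.IsIndepSet J ∧ J ⊆ (insert r (G.neighborSet r))ᶜ := by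
  rw [← SimpleGraph.isClique_compl, SimpleGraph.isClique_insert_of_notMem hr,
    SimpleGraph.isClique_compl]
  simp [Set.subset_def, eq_comm]

theorem sum_isIndepSet_mem (G : SimpleGraph V) (w : V → R) (r : V) :
    ∑ I ∈ {I : Finset V | G.IsIndepSet ↑I ∧ r ∈ I}, ∏ v ∈ I, w v =
      w r * indepSum G ((insert r (G.neighborSet r))ᶜ.indicator w) := by
  rw [indepSum_indicator, Finset.mul_sum]
  refine Finset.sum_bij' (fun I _ => I.erase r) (fun J _ => insert r J) ?_ ?_ ?_ ?_ ?_ <;>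
    simp only [Finset.mem_filter_univ]
  · rintro I ⟨hI, hr⟩
    refine (isIndepSet_insert_iff_of_notMem (Finset.notMem_erase r I)).1 ?_
    rwa [← Finset.coe_insert, Finset.insert_erase hr]
  · rintro J ⟨hJ, hJr⟩
    refine ⟨?_, Finset.mem_insert_self r J⟩
    rw [Finset.coe_insert]
    exact (isIndepSet_insert_iff_of_notMem fun hr => hJr hr (.inl rfl)).2 ⟨hJ, hJr⟩
  · exact fun I hI => Finset.insert_erase hI.2
  · exact fun J hJ => Finset.erase_insert fun hr => hJ.2 hr (.inl rfl)
  · exact fun I hI => (Finset.mul_prod_erase I w hI.2).symm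

theorem indepSum_eq_add_mul (G : SimpleGraph V) (w : V → R) (r : V) :
    indepSum G w = indepSum G (({r}ᶜ : Set V).indicator w) +
      w r * indepSum G ((insert r (G.neighborSet r))ᶜ.indicator w) := by
  rw [← sum_isIndepSet_mem, indepSum_indicator, add_comm, indepSum,
    ← Finset.sum_filter_add_sum_filter_not _ (fun I : Finset V => r ∈ I)]
  simp only [Finset.filter_filter, Set.subset_compl_singleton_iff, Finset.mem_coe]

end IndepSum

section RootJoin

variable {ι : Type*} {V : ι → Type*}

/-- The adjacency relation of `rootJoin`, with the new root encoded as `none`. -/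
inductive RootJoinAdj (G : ∀ i, SimpleGraph (V i)) (r : ∀ i, V i) :
    Option (Σ i, V i) → Option (Σ i, V i) → Prop
  | root_left (i : ι) : RootJoinAdj G r none (some ⟨i, r i⟩)
  | root_right (i : ι) : RootJoinAdj G r (some ⟨i, r i⟩) none
  | branch {i : ι} {a b : V i} (h : (G i).Adj a b) :
      RootJoinAdj G r (some ⟨i, a⟩) (some ⟨i, b⟩)

/-- The disjoint union of the rooted graphs `(G i, r i)` together with a new vertex, the root
`none`, joined to every `r i`. -/
def rootJoin (G : ∀ i, SimpleGraph (V i)) (r : ∀ i, V i) :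
    SimpleGraph (Option (Σ i, V i)) where
  Adj := RootJoinAdj G r
  symm := ⟨by
    rintro _ _ (i | i | h)
    · exact .root_right i
    · exact .root_left i
    · exact .branch h.symm⟩
  loopless := ⟨by
    rintro (_ | ⟨i, a⟩) h
    · cases h
    · cases h with | branch h => exact h.ne rfl⟩

variable (G : ∀ i, SimpleGraph (V i)) (r : ∀ i, V i)

@[simp] theorem rootJoin_adj_none_some {i : ι} {v : V i} :
    (rootJoin G r).Adj none (some ⟨i, v⟩) ↔ v = r i :=
  ⟨fun h => by cases h; rfl, fun h => h ▸ .root_left i⟩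

@[simp] theorem rootJoin_adj_some_none {i : ι} {v : V i} :
    (rootJoin G r).Adj (some ⟨i, v⟩) none ↔ v = r i := by
  rw [SimpleGraph.adj_comm, rootJoin_adj_none_some]

@[simp] theorem rootJoin_adj_some_some_same {i : ι} {a b : V i} :
    (rootJoin G r).Adj (some ⟨i, a⟩) (some ⟨i, b⟩) ↔ (G i).Adj a b :=
  ⟨fun h => by cases h with | branch h => exact h, .branch⟩

theorem not_rootJoin_adj_of_ne {i j : ι} (hij : i ≠ j) (a : V i) (b : V j) :
    ¬ (rootJoin G r).Adj (some ⟨i, a⟩) (some ⟨j, b⟩) := by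
  rintro ⟨⟩
  exact hij rfl

theorem connected_rootJoin (hG : ∀ i, (G i).Connected) : (rootJoin G r).Connected := by
  have reachable_root : ∀ v, (rootJoin G r).Reachable none v := by
    rintro (_ | ⟨i, v⟩)
    · rfl
    · let inclusion : G i →g rootJoin G r := ⟨fun v => some ⟨i, v⟩, .branch⟩
      have root_adj : (rootJoin G r).Adj none (inclusion (r i)) := .root_left i
      exact root_adj.reachable.trans (((hG i).preconnected (r i) v).map inclusion)
  exact ⟨fun u v => (reachable_root u).symm.trans (reachable_root v)⟩

theorem isIndepSet_rootJoin_image_some_iff (I : ∀ i, Set (V i)) :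
    (rootJoin G r).IsIndepSet (some '' Set.univ.sigma I) ↔ ∀ i, (G i).IsIndepSet (I i) := by
  constructor
  · intro h i a ha b hb hab hadj
    have mem_image {v : V i} (hv : v ∈ I i) :
        some (Sigma.mk i v) ∈ some '' Set.univ.sigma I := ⟨_, ⟨trivial, hv⟩, rfl⟩
    exact h (mem_image ha) (mem_image hb) (by simpa using hab) (.branch hadj)
  · rintro h _ ⟨⟨i, a⟩, ⟨-, ha⟩, rfl⟩ _ ⟨⟨j, b⟩, ⟨-, hb⟩, rfl⟩ - hadj
    cases hadj with
    | branch hab => exact h i ha hb hab.ne hab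

section Fintype

variable [Fintype ι] [∀ i, Fintype (V i)]

theorem degree_rootJoin_none : (rootJoin G r).degree none = Fintype.card ι := by
  have h := SimpleGraph.degree_eq_sum_if_adj (R := ℕ) (rootJoin G r) none
  simpa only [Fintype.sum_option, Fintype.sum_sigma, SimpleGraph.irrefl, if_false, zero_add,
    rootJoin_adj_none_some, Finset.sum_ite_eq', Finset.mem_univ, if_true, Finset.sum_const,
    Finset.card_univ, smul_eq_mul, mul_one, Nat.cast_id] using h

theorem degree_rootJoin_some (i : ι) (v : V i) :
    (rootJoin G r).degree (some ⟨i, v⟩) = (if v = r i then 1 else 0) + (G i).degree v := by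
  have h := SimpleGraph.degree_eq_sum_if_adj (R := ℕ) (rootJoin G r) (some ⟨i, v⟩)
  rw [Fintype.sum_option, Fintype.sum_sigma, Fintype.sum_eq_single i fun j hj =>
    Finset.sum_eq_zero fun b _ => if_neg (not_rootJoin_adj_of_ne G r hj.symm v b)] at h
  have h' := SimpleGraph.degree_eq_sum_if_adj (R := ℕ) (G i) v
  simp only [rootJoin_adj_some_none, rootJoin_adj_some_some_same, Nat.cast_id] at h h'
  rw [h, h']

theorem card_edgeFinset_rootJoin :
    (rootJoin G r).edgeFinset.card = Fintype.card ι + ∑ i, (G i).edgeFinset.card := by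
  have twice_card := (rootJoin G r).sum_degrees_eq_twice_card_edges
  rw [Fintype.sum_option, Fintype.sum_sigma] at twice_card
  simp only [degree_rootJoin_none, degree_rootJoin_some, Finset.sum_add_distrib,
    Finset.sum_ite_eq', Finset.mem_univ, if_true, SimpleGraph.sum_degrees_eq_twice_card_edges,
    ← Finset.mul_sum, Finset.sum_const, Finset.card_univ, smul_eq_mul, mul_one] at twice_card
  omega

theorem indepSum_rootJoin_of_none_eq_zero {R : Type*} [CommSemiring R]
    {w : Option (Σ i, V i) → R} (hw : w none = 0) :
    indepSum (rootJoin G r) w = ∏ i, indepSum (G i) fun v => w (some ⟨i, v⟩) := by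
  simp only [indepSum, Finset.prod_univ_sum]
  symm
  refine Finset.sum_of_injOn (fun I => (Finset.univ.sigma I).map .some) ?_ ?_ ?_ ?_
  · intro I _ J _ h
    ext i v
    simpa using Finset.ext_iff.1 (Finset.map_injective _ h) ⟨i, v⟩
  · intro I hI
    simpa [isIndepSet_rootJoin_image_some_iff] using hI
  · intro I hI not_image
    refine Finset.prod_eq_zero (i := none) ?_ hw
    by_contra none_notMem
    let branches (i : ι) : Finset (V i) := {v | some ⟨i, v⟩ ∈ I}
    have map_branches : (Finset.univ.sigma branches).map .some = I := by
      ext (_ | ⟨i, v⟩) <;> simp [branches, none_notMem]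
    refine not_image ⟨branches, ?_, map_branches⟩
    rw [← map_branches] at hI
    simpa [isIndepSet_rootJoin_image_some_iff] using hI
  · intro I _
    simp [Finset.prod_sigma]

theorem indepSum_rootJoin {R : Type*} [CommSemiring R] (w : Option (Σ i, V i) → R) :
    indepSum (rootJoin G r) w = ∏ i, indepSum (G i) (fun v => w (some ⟨i, v⟩)) +
      w none * ∏ i, indepSum (G i) (({r i}ᶜ : Set (V i)).indicator fun v => w (some ⟨i, v⟩)) := by
  rw [indepSum_eq_add_mul (rootJoin G r) w none,
    indepSum_rootJoin_of_none_eq_zero G r (by simp),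
    indepSum_rootJoin_of_none_eq_zero G r (by simp)]
  have avoid_neighbors (i : ι) :
      (fun v => (insert none ((rootJoin G r).neighborSet none))ᶜ.indicator w (some ⟨i, v⟩)) =
        ({r i}ᶜ : Set (V i)).indicator fun v => w (some ⟨i, v⟩) := by
    ext v
    simp [Set.indicator_apply]
  simp [avoid_neighbors]

end Fintype

theorem isTree_rootJoin [Finite ι] [∀ i, Finite (V i)] (hG : ∀ i, (G i).IsTree) :
    (rootJoin G r).IsTree := by
  have := Fintype.ofFinite ι
  have (i : ι) := Fintype.ofFinite (V i)
  refine SimpleGraph.isTree_iff_connected_and_card.2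
    ⟨connected_rootJoin G r fun i => (hG i).connected, ?_⟩
  rw [Nat.card_eq_fintype_card, ← SimpleGraph.edgeFinset_card, card_edgeFinset_rootJoin,
    Nat.card_eq_fintype_card, Fintype.card_option, Fintype.card_sigma]
  simp only [← (hG _).card_edgeFinset, Finset.sum_add_distrib, Finset.sum_const,
    Finset.card_univ, smul_eq_mul, mul_one]
  omega

end RootJoin

section RootRatio

variable {K : Type*} [Field K]

/-- `z` is the occupation ratio of `G` at `r` for constant weight `x`: the independent sets
containing `r` weigh `z` times as much as those avoiding `r`, and the latter weight is nonzero.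
The second clause compares with the total weight, which avoids a subtraction. -/
def HasRootRatio {V : Type*} [Fintype V] (G : SimpleGraph V) (r : V) (x z : K) : Prop :=
  indepSum G (({r}ᶜ : Set V).indicator fun _ => x) ≠ 0 ∧
    indepSum G (fun _ => x) = (1 + z) * indepSum G (({r}ᶜ : Set V).indicator fun _ => x)

theorem HasRootRatio.div_prod {ι : Type*} [Fintype ι] {V : ι → Type*} [∀ i, Fintype (V i)]
    {G : ∀ i, SimpleGraph (V i)} {r : ∀ i, V i} {x : K} {z : ι → K}
    (h : ∀ i, HasRootRatio (G i) (r i) x (z i)) (hz : ∀ i, 1 + z i ≠ 0) :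
    HasRootRatio (rootJoin G r) none x (x / ∏ i, (1 + z i)) := by
  have hprod : ∏ i, (1 + z i) ≠ 0 := Finset.prod_ne_zero_iff.2 fun i _ => hz i
  have root_avoided : indepSum (rootJoin G r) (({none}ᶜ : Set _).indicator fun _ => x) =
      (∏ i, (1 + z i)) * ∏ i, indepSum (G i) (({r i}ᶜ : Set (V i)).indicator fun _ => x) := by
    rw [indepSum_rootJoin_of_none_eq_zero G r (by simp), ← Finset.prod_mul_distrib]
    simp [(h _).2]
  rw [HasRootRatio, root_avoided, indepSum_rootJoin]
  refine ⟨mul_ne_zero hprod (Finset.prod_ne_zero_iff.2 fun i _ => (h i).1), ?_⟩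
  simp only [(h _).2, Finset.prod_mul_distrib]
  field_simp

/-- `z` is the occupation ratio, for constant weight `x`, of a finite rooted tree of maximum
degree at most `Δ` whose root can be given one more neighbour. -/
def IsTreeRatio (Δ : ℕ) (x z : K) : Prop :=
  ∃ (V : Type) (_ : Fintype V) (T : SimpleGraph V) (r : V),
    T.IsTree ∧ (∀ v, T.degree v ≤ Δ) ∧ T.degree r < Δ ∧ HasRootRatio T r x z

theorem IsTreeRatio.div_prod {ι : Type} [Fintype ι] {Δ : ℕ} {x : K} {z : ι → K}
    (hι : Fintype.card ι < Δ) (h : ∀ i, IsTreeRatio Δ x (z i)) (hz : ∀ i, 1 + z i ≠ 0) :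
    IsTreeRatio Δ x (x / ∏ i, (1 + z i)) := by
  choose V _ T r hT hdeg hroot hratio using h
  refine ⟨_, inferInstance, rootJoin T r, none, isTree_rootJoin T r hT, ?_, ?_,
    HasRootRatio.div_prod hratio hz⟩
  · rintro (_ | ⟨i, v⟩)
    · exact (degree_rootJoin_none T r).trans_le hι.le
    · rw [degree_rootJoin_some]
      split_ifs with hv
      · rw [hv, add_comm]
        exact hroot i
      · simpa using hdeg i v
  · rwa [degree_rootJoin_none]

theorem isTreeRatio_self {Δ : ℕ} (hΔ : 0 < Δ) (x : K) : IsTreeRatio Δ x x := by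
  have h := IsTreeRatio.div_prod (ι := Empty) (z := fun _ => 0) (x := x) (by simpa using hΔ)
    (fun i => i.elim) (fun i => i.elim)
  simpa using h

theorem IsTreeRatio.div_pow {Δ k : ℕ} (hk : k < Δ) {x z : K} (h : IsTreeRatio Δ x z)
    (hz : 1 + z ≠ 0) : IsTreeRatio Δ x (x / (1 + z) ^ k) := by
  have := IsTreeRatio.div_prod (ι := Fin k) (by simpa using hk) (fun _ => h) (fun _ => hz)
  simpa using this

theorem IsTreeRatio.exists_tree_indepSum_eq_zero {Δ : ℕ} {x : K} (h : IsTreeRatio Δ x (-1)) :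
    ∃ (V : Type) (_ : Fintype V) (T : SimpleGraph V),
      T.IsTree ∧ (∀ v : V, T.degree v ≤ Δ) ∧ indepSum T (fun _ => x) = 0 := by
  obtain ⟨V, _, T, r, hT, hdeg, -, -, htotal⟩ := h
  exact ⟨V, _, T, hT, hdeg, by rw [htotal, add_neg_cancel, zero_mul]⟩

end RootRatio

theorem exists_tree_zero_general {K : Type*} [Field K] (Δ n : ℕ) (d : ℕ → ℕ)
    (hd : ∀ i < n, d i < Δ) (lam : K) (z : ℕ → K)
    (hz0 : z 0 = 0) (hz : ∀ i < n, z (i + 1) = lam / (1 + z i) ^ d i) (hend : z n = -1) :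
    ∃ (V : Type) (_ : Fintype V) (T : SimpleGraph V),
      T.IsTree ∧ (∀ v : V, T.degree v ≤ Δ) ∧ indepSum T (fun _ => lam) = 0 := by
  by_contra no_tree
  have one_add_ne_zero {y : K} (hy : IsTreeRatio Δ lam y) : 1 + y ≠ 0 := fun h =>
    no_tree (eq_neg_of_add_eq_zero_right h ▸ hy).exists_tree_indepSum_eq_zero
  have isTreeRatio_orbit (i : ℕ) (hi : i < n) : IsTreeRatio Δ lam (z (i + 1)) := by
    induction i with
    | zero => simpa [hz 0 hi, hz0] using isTreeRatio_self (Nat.zero_lt_of_lt (hd 0 hi)) lam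
    | succ i ih =>
      have ratio := ih (Nat.lt_of_succ_lt hi)
      exact hz (i + 1) hi ▸ ratio.div_pow (hd (i + 1) hi) (one_add_ne_zero ratio)
  cases n with
  | zero => simp [hz0] at hend
  | succ n =>
    exact one_add_ne_zero (isTreeRatio_orbit n n.lt_succ_self) (by rw [hend, add_neg_cancel])

/-- If the orbit of `0` under the successive maps `f_{λ,d_i}(z) = λ/(1+z)^{d_i}`,
with all `d_i ∈ {1,…,Δ−1}`, reaches `−1`, then some finite tree of maximum degree at most `Δ`
has `λ` as a root of its independence polynomial. -/
theorem exists_tree_zero (Δ : ℕ) (hΔ : 3 ≤ Δ) (n : ℕ) (d : ℕ → ℕ)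
    (hd : ∀ i < n, 1 ≤ d i ∧ d i ≤ Δ - 1) (lam : ℂ) (z : ℕ → ℂ)
    (hz0 : z 0 = 0) (hz : ∀ i < n, z (i + 1) = lam / (1 + z i) ^ d i)
    (hend : z n = -1) :
    ∃ (V : Type) (_ : Fintype V) (T : SimpleGraph V),
      T.IsTree ∧ (∀ v : V, T.degree v ≤ Δ) ∧ Zind T lam = 0 := by
  simp only [Zind_eq_indepSum]
  exact exists_tree_zero_general Δ n d (fun i hi => by have := hd i hi; omega) lam z hz0 hz hend
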